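/- Let F be a Ferrers diagram of semiperimeter n+1, T ∈ EWtab(F), S = S(T) its supplementary tableau, and let k, k' ∈ cols(F) with k < k'. Then the following are equivalent: (i) for every j' ∈ rows(F) with j' < k, if T_{j'k'} = 0 then T_{j'k} = 0; (ii) in CanonTop(φ_TC(T)), the column k' lies in the same block as k or in a later block than k. -/

import Mathlib

open Classical

/-- A Ferrers diagram of semiperimeter `n + 1`, encoded by the set of its row labels
(labels `0, …, n` run along the south-east border; `0` labels the top row and the
last label `n` is a column label). -/
structure Ferrers (n : ℕ) where
  rows : Finset (Fin (n + 1))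
  zero_mem : 0 ∈ rows
  last_not_mem : Fin.last n ∉ rows

namespace Ferrers

/-- `(i, j)` is a cell of the diagram: `i` is a row label, `j` a column label, `i < j`. -/
def Cell {n : ℕ} (F : Ferrers n) (i j : Fin (n + 1)) : Prop :=
  i ∈ F.rows ∧ j ∉ F.rows ∧ i < j

/-- Adjacency in the Ferrers graph `G(F)`. -/
def Adj {n : ℕ} (F : Ferrers n) (u v : Fin (n + 1)) : Prop :=
  F.Cell u v ∨ F.Cell v u

/-- Degree of a vertex in `G(F)`. -/
noncomputable def deg {n : ℕ} (F : Ferrers n) (v : Fin (n + 1)) : ℕ :=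
  {u | F.Adj v u}.ncard

/-- Toppling a single vertex.  The height at the sink `0` is kept equal to `c 0`
(grains sent to the sink vanish); toppling the sink sends one grain to each of
its neighbours. -/
noncomputable def topple {n : ℕ} (F : Ferrers n) (c : Fin (n + 1) → ℕ)
    (v : Fin (n + 1)) : Fin (n + 1) → ℕ :=
  fun u =>
    if u = 0 then c 0
    else if u = v then c v - F.deg v
    else if F.Adj v u then c u + 1
    else c u

/-- Toppling the vertices of a list in order. -/
noncomputable def toppleList {n : ℕ} (F : Ferrers n) (c : Fin (n + 1) → ℕ)
    (l : List (Fin (n + 1))) : Fin (n + 1) → ℕ :=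
  l.foldl F.topple c

/-- Simultaneous toppling of a set of vertices. -/
noncomputable def toppleSet {n : ℕ} (F : Ferrers n) (c : Fin (n + 1) → ℕ)
    (S : Set (Fin (n + 1))) : Fin (n + 1) → ℕ :=
  fun u =>
    if u = 0 then c 0
    else c u + {w ∈ S | F.Adj w u}.ncard - if u ∈ S then F.deg u else 0

/-- A configuration is stable if every non-sink vertex has fewer grains than its degree. -/
def Stable {n : ℕ} (F : Ferrers n) (c : Fin (n + 1) → ℕ) : Prop :=
  ∀ v, v ≠ 0 → c v < F.deg v

/-- A Dhar (burning) ordering for `c`: an ordering `v₀ = 0, v₁, …, vₙ` of all the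
vertices such that each `vᵢ` (`i ≥ 1`) is unstable after toppling `v₀, …, v_{i-1}`. -/
def DharSeq {n : ℕ} (F : Ferrers n) (c : Fin (n + 1) → ℕ) (l : List (Fin (n + 1))) : Prop :=
  l.length = n + 1 ∧ l.Nodup ∧ l.head? = some 0 ∧
    ∀ i, ∀ h : i < l.length, 1 ≤ i →
      F.deg (l.get ⟨i, h⟩) ≤ F.toppleList c (l.take i) (l.get ⟨i, h⟩)

/-- Recurrent configurations (via Dhar's criterion).  The height at the sink is
normalised to `0`. -/
def Recurrent {n : ℕ} (F : Ferrers n) (c : Fin (n + 1) → ℕ) : Prop :=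
  c 0 = 0 ∧ F.Stable c ∧ ∃ l, F.DharSeq c l

/-- Minimal recurrent configurations: recurrent with minimal total number of grains. -/
def RecMin {n : ℕ} (F : Ferrers n) (c : Fin (n + 1) → ℕ) : Prop :=
  F.Recurrent c ∧ ∀ c', F.Recurrent c' → (∑ v, c v) ≤ ∑ v, c' v

/-- Canonical toppling: block `0` is `{0}` (the sink); from then on, blocks with odd
index are the sets of currently unstable column vertices and blocks with even index
the sets of currently unstable row vertices.  The first component is the configuration
just before toppling the block recorded in the second component. -/
noncomputable def canonAux {n : ℕ} (F : Ferrers n) (c : Fin (n + 1) → ℕ) :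
    ℕ → ((Fin (n + 1) → ℕ) × Set (Fin (n + 1)))
  | 0 => (c, {0})
  | k + 1 =>
    let c' := F.toppleSet (canonAux F c k).1 (canonAux F c k).2
    (c', {v | v ≠ 0 ∧ (if k % 2 = 0 then v ∉ F.rows else v ∈ F.rows) ∧ F.deg v ≤ c' v})

/-- The `k`-th block of the canonical toppling of `c`:
`canonTop F c 0 = U⁰ = {0}`, `canonTop F c (2i-1) = Vⁱ`, `canonTop F c (2i) = Uⁱ`. -/
noncomputable def canonTop {n : ℕ} (F : Ferrers n) (c : Fin (n + 1) → ℕ) (k : ℕ) :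
    Set (Fin (n + 1)) :=
  (F.canonAux c k).2

/-- The configuration just before toppling the `k`-th block of the canonical toppling. -/
noncomputable def canonConfig {n : ℕ} (F : Ferrers n) (c : Fin (n + 1) → ℕ) (k : ℕ) :
    Fin (n + 1) → ℕ :=
  (F.canonAux c k).1

/-- The index of the block of the canonical toppling of `c` containing `v`. -/
noncomputable def bIdx {n : ℕ} (F : Ferrers n) (c : Fin (n + 1) → ℕ) (v : Fin (n + 1)) : ℕ :=
  sInf {k | v ∈ F.canonTop c k}

/-- `T` is a EW-tableau on `F` (entries of non-cells are normalised to `false`):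
the top row contains only `1`s, every other row contains a `0`, and there is no
rectangle with two diagonally opposite `0`s and two `1`s in the other corners. -/
def IsEW {n : ℕ} (F : Ferrers n) (T : Fin (n + 1) → Fin (n + 1) → Bool) : Prop :=
  (∀ i j, ¬F.Cell i j → T i j = false) ∧
  (∀ j, F.Cell 0 j → T 0 j = true) ∧
  (∀ i, i ∈ F.rows → i ≠ 0 → ∃ j, F.Cell i j ∧ T i j = false) ∧
  (∀ i i' j j', F.Cell i j → F.Cell i j' → F.Cell i' j → F.Cell i' j' →
    T i j = T i' j' → T i j' = T i' j → T i j = T i j')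

/-- The configuration associated to a tableau: row vertices count the `1`s in their
row, column vertices count the `0`s in their column (the sink is normalised to `0`). -/
noncomputable def phiTC {n : ℕ} (F : Ferrers n) (T : Fin (n + 1) → Fin (n + 1) → Bool) :
    Fin (n + 1) → ℕ :=
  fun v =>
    if v = 0 then 0
    else if v ∈ F.rows then {j | F.Cell v j ∧ T v j = true}.ncard
    else {i | F.Cell i v ∧ T i v = false}.ncard

/-- The tableau associated to a (minimal recurrent) configuration: a cell `(i, j)`
gets a `1` exactly when `i` lies in an earlier block than `j` in the canonical
toppling of `c`. -/
noncomputable def phiCT {n : ℕ} (F : Ferrers n) (c : Fin (n + 1) → ℕ) :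
    Fin (n + 1) → Fin (n + 1) → Bool :=
  fun i j => if F.Cell i j ∧ F.bIdx c i < F.bIdx c j then true else false

/-- The supplementary tableau of `T`: `S i j = 1` exactly when the row vertex `i`
lies in an earlier block than the column vertex `j` in `CanonTop (φ_TC T)`. -/
noncomputable def suppS {n : ℕ} (F : Ferrers n) (T : Fin (n + 1) → Fin (n + 1) → Bool)
    (i j : Fin (n + 1)) : Bool :=
  if F.bIdx (F.phiTC T) i < F.bIdx (F.phiTC T) j then true else false

/-- The entry of `T` in cell `(j, k)` is a cornersupport entry. -/
def Cornersupport {n : ℕ} (F : Ferrers n) (T : Fin (n + 1) → Fin (n + 1) → Bool)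
    (j k : Fin (n + 1)) : Prop :=
  ∃ j' k', j' ∈ F.rows ∧ k' ∉ F.rows ∧ j' ≠ j ∧ k' ≠ k ∧
    F.suppS T j' k' = !(T j k) ∧ F.suppS T j' k = T j k ∧ F.suppS T j k' = T j k

/-- `ν_v(T)`: the number of non-cornersupport `0`s in row `v` (if `v` is a row label),
resp. non-cornersupport `1`s in column `v` (if `v` is a column label). -/
noncomputable def nu {n : ℕ} (F : Ferrers n) (T : Fin (n + 1) → Fin (n + 1) → Bool)
    (v : Fin (n + 1)) : ℕ :=
  if v ∈ F.rows then {k | F.Cell v k ∧ T v k = false ∧ ¬F.Cornersupport T v k}.ncard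
  else {i | F.Cell i v ∧ T i v = true ∧ ¬F.Cornersupport T i v}.ncard

/-- `μ_v(c)`: if `v ∈ Uⁱ`, the number of `k ∈ Vⁱ` with `k > v`; if `v ∈ Vⁱ`,
the number of `k ∈ U^{i-1}` with `k < v`.  In both cases the relevant block is the
one immediately preceding the block of `v`. -/
noncomputable def mu {n : ℕ} (F : Ferrers n) (c : Fin (n + 1) → ℕ) (v : Fin (n + 1)) : ℕ :=
  if v ∈ F.rows then {k | v < k ∧ k ∈ F.canonTop c (F.bIdx c v - 1)}.ncard
  else {k | k < v ∧ k ∈ F.canonTop c (F.bIdx c v - 1)}.ncard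

/-- The minimal recurrent configuration with the same canonical toppling as `c`:
if `j ∈ Uⁱ` then `minrec c j = |{ℓ ∈ Vᵏ : j < ℓ, k > i}|`, and if `j ∈ Vⁱ` then
`minrec c j = |{ℓ ∈ Uᵏ : ℓ < j, k ≥ i}|` (blocks `Vᵏ` sit at odd index `2k - 1`,
blocks `Uᵏ` at even index `2k`). -/
noncomputable def minrecFun {n : ℕ} (F : Ferrers n) (c : Fin (n + 1) → ℕ) :
    Fin (n + 1) → ℕ :=
  fun j =>
    if j = 0 then 0
    else if j ∈ F.rows then
      {l | j < l ∧ ∃ k, F.bIdx c j < 2 * k + 1 ∧ l ∈ F.canonTop c (2 * k + 1)}.ncard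
    else
      {l | l < j ∧ ∃ k, F.bIdx c j < 2 * k ∧ l ∈ F.canonTop c (2 * k)}.ncard

/-- The number of edges of `G(F)` (equivalently, the number of cells of `F`). -/
noncomputable def edgeCount {n : ℕ} (F : Ferrers n) : ℕ :=
  {p : Fin (n + 1) × Fin (n + 1) | F.Cell p.1 p.2}.ncard

end Ferrers

/-!
Orient the edge of `G(F)` at a cell `(i, j)` from `i` to `j` if `T i j = 1` and from `j` to `i` if
`T i j = 0`. The forbidden rectangles make this orientation acyclic, the conditions on the rows make
`0` its only source, and `φ_TC(T)` records its out-degrees. By conservation of grains, a vertex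
becomes unstable exactly when all its in-neighbours have toppled. Hence block indices strictly
increase along arcs, and if every in-neighbour of `u` is an in-neighbour of a vertex `v` of the same
kind (row or column), then `u` topples no later than `v`. For columns `k < k'`, condition (i) says
precisely that every in-neighbour of `k` is an in-neighbour of `k'`.
-/

namespace Ferrers

variable {n : ℕ} {F : Ferrers n} {u v w : Fin (n + 1)}

theorem adj_comm : F.Adj u v ↔ F.Adj v u := or_comm

section CanonicalToppling

variable {c : Fin (n + 1) → ℕ} {k l : ℕ}

/-- The set of vertices that have toppled when the canonical toppling of `c` reaches block `k`,
that is, the union of the blocks of index less than `k`. -/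
def toppledBefore (F : Ferrers n) (c : Fin (n + 1) → ℕ) (k : ℕ) : Set (Fin (n + 1)) :=
  ⋃ i < k, F.canonTop c i

theorem mem_toppledBefore : v ∈ F.toppledBefore c k ↔ ∃ i < k, v ∈ F.canonTop c i := by
  simp [toppledBefore]

theorem toppledBefore_succ :
    F.toppledBefore c (k + 1) = F.toppledBefore c k ∪ F.canonTop c k :=
  Set.biUnion_lt_succ _ _

theorem toppledBefore_mono (h : k ≤ l) : F.toppledBefore c k ⊆ F.toppledBefore c l :=
  Set.biUnion_subset_biUnion_left fun _ hi => lt_of_lt_of_le hi h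

theorem mem_canonTop_zero : v ∈ F.canonTop c 0 ↔ v = 0 := Iff.rfl

theorem mem_canonTop_succ :
    v ∈ F.canonTop c (k + 1) ↔
      v ≠ 0 ∧ (v ∈ F.rows ↔ Odd k) ∧ F.deg v ≤ F.canonConfig c (k + 1) v := by
  have hkind : (if k % 2 = 0 then v ∉ F.rows else v ∈ F.rows) ↔ (v ∈ F.rows ↔ Odd k) := by
    split_ifs with hk
    · simp [Nat.odd_iff, hk]
    · simp [Nat.odd_iff, Nat.mod_two_ne_zero.1 hk]
  rw [← hkind]
  rfl

theorem deg_le_canonConfig (hv : v ≠ 0) (hvk : v ∈ F.canonTop c k) :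
    F.deg v ≤ F.canonConfig c k v := by
  cases k with
  | zero => exact absurd (mem_canonTop_zero.1 hvk) hv
  | succ k => exact (mem_canonTop_succ.1 hvk).2.2

theorem canonConfig_succ_add_deg (hv : v ≠ 0) :
    F.canonConfig c (k + 1) v + (if v ∈ F.canonTop c k then F.deg v else 0) =
      F.canonConfig c k v + {w ∈ F.canonTop c k | F.Adj w v}.ncard := by
  have htopple : F.canonConfig c (k + 1) v = F.canonConfig c k v +
      {w ∈ F.canonTop c k | F.Adj w v}.ncard - if v ∈ F.canonTop c k then F.deg v else 0 :=
    if_neg hv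
  rw [htopple]
  refine Nat.sub_add_cancel ?_
  split_ifs with hvk
  · exact (deg_le_canonConfig hv hvk).trans (Nat.le_add_right _ _)
  · exact Nat.zero_le _

theorem canonConfig_add_deg
    (hdisj : ∀ i < k, Disjoint (F.toppledBefore c i) (F.canonTop c i)) (hv : v ≠ 0) :
    F.canonConfig c k v + (if v ∈ F.toppledBefore c k then F.deg v else 0) =
      c v + {w ∈ F.toppledBefore c k | F.Adj w v}.ncard := by
  induction k with
  | zero => simp [toppledBefore, canonConfig, canonAux]
  | succ k ih =>
    have hk := hdisj k k.lt_succ_self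
    have hreceived : {w ∈ F.toppledBefore c (k + 1) | F.Adj w v}.ncard =
        {w ∈ F.toppledBefore c k | F.Adj w v}.ncard +
          {w ∈ F.canonTop c k | F.Adj w v}.ncard := by
      rw [toppledBefore_succ, ← Set.ncard_union_eq
        (hk.mono (Set.sep_subset _ _) (Set.sep_subset _ _))]
      congr 1
      ext w
      exact or_and_right
    have hlost : (if v ∈ F.toppledBefore c (k + 1) then F.deg v else 0) =
        (if v ∈ F.toppledBefore c k then F.deg v else 0) +
          if v ∈ F.canonTop c k then F.deg v else 0 := by
      have hnot_both : v ∈ F.toppledBefore c k → v ∉ F.canonTop c k :=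
        fun h => Set.disjoint_left.1 hk h
      simp only [toppledBefore_succ, Set.mem_union]
      split_ifs <;> simp_all
    have hstep := canonConfig_succ_add_deg (F := F) (c := c) (k := k) hv
    have hbefore := ih fun i hi => hdisj i (hi.trans k.lt_succ_self)
    omega

/-- A vertex that has toppled once got back at most one grain per neighbour, so it is again as low
as in `c`. -/
theorem Stable.disjoint_toppledBefore_canonTop (hc : F.Stable c) (k : ℕ) :
    Disjoint (F.toppledBefore c k) (F.canonTop c k) := by
  induction k using Nat.strong_induction_on with
  | _ k ih =>
    cases k with
    | zero => simp [toppledBefore]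
    | succ k =>
      refine Set.disjoint_left.2 fun v hv hvk => ?_
      obtain ⟨hv0, -, hunstable⟩ := mem_canonTop_succ.1 hvk
      have hgrains := canonConfig_add_deg ih hv0
      rw [if_pos hv] at hgrains
      have hreceived : {w ∈ F.toppledBefore c (k + 1) | F.Adj w v}.ncard ≤ F.deg v :=
        Set.ncard_le_ncard fun w hw => adj_comm.1 hw.2
      have hstable := hc v hv0
      omega

theorem Stable.deg_le_canonConfig_iff (hc : F.Stable c) (hv : v ≠ 0)
    (hvk : v ∉ F.toppledBefore c k) :
    F.deg v ≤ F.canonConfig c k v ↔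
      F.deg v ≤ c v + {w ∈ F.toppledBefore c k | F.Adj w v}.ncard := by
  rw [← canonConfig_add_deg (fun i _ => hc.disjoint_toppledBefore_canonTop i) hv, if_neg hvk,
    add_zero]

theorem bIdx_le (hv : v ∈ F.canonTop c k) : F.bIdx c v ≤ k := Nat.sInf_le hv

theorem mem_canonTop_bIdx (h : ∃ k, v ∈ F.canonTop c k) : v ∈ F.canonTop c (F.bIdx c v) :=
  Nat.sInf_mem h

theorem bIdx_lt_of_mem_toppledBefore (hv : v ∈ F.toppledBefore c k) : F.bIdx c v < k := by
  obtain ⟨i, hik, hvi⟩ := mem_toppledBefore.1 hv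
  exact (bIdx_le hvi).trans_lt hik

end CanonicalToppling

section Orientation

variable {r : Fin (n + 1) → Fin (n + 1) → Prop} {k : ℕ}

/-- `r` is an acyclic orientation of the Ferrers graph `G(F)` whose only source is the sink `0` of
the sandpile model; `r u v` means that the edge is directed from `u` to `v`. Acyclicity is encoded
as well-foundedness, which on a finite vertex set is the same. -/
structure IsRootedAcyclicOrientation (F : Ferrers n) (r : Fin (n + 1) → Fin (n + 1) → Prop) :
    Prop where
  adj_iff : ∀ u v, F.Adj u v ↔ r u v ∨ r v u
  wellFounded : WellFounded r
  exists_rel : ∀ v, v ≠ 0 → ∃ w, r w v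

/-- The configuration whose height at each vertex is its out-degree in `r`, normalised to `0` at
the sink. -/
noncomputable def outdegreeConfig (r : Fin (n + 1) → Fin (n + 1) → Prop) : Fin (n + 1) → ℕ :=
  fun v => if v = 0 then 0 else {w | r v w}.ncard

theorem outdegreeConfig_of_ne_zero (hv : v ≠ 0) : outdegreeConfig r v = {w | r v w}.ncard :=
  if_neg hv

namespace IsRootedAcyclicOrientation

theorem not_rel_zero (hr : F.IsRootedAcyclicOrientation r) : ¬r w 0 := by
  obtain ⟨m, -, hmin⟩ := hr.wellFounded.has_min Set.univ Set.univ_nonempty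
  have hm : m = 0 := by
    by_contra hm
    obtain ⟨w, hw⟩ := hr.exists_rel m hm
    exact hmin w (Set.mem_univ w) hw
  exact hm ▸ hmin w (Set.mem_univ w)

theorem deg_eq_add (hr : F.IsRootedAcyclicOrientation r) (v : Fin (n + 1)) :
    F.deg v = {w | r v w}.ncard + {w | r w v}.ncard := by
  have hdisj : Disjoint {w | r v w} {w | r w v} :=
    Set.disjoint_left.2 fun w => hr.wellFounded.asymmetric v w
  rw [← Set.ncard_union_eq hdisj, deg]
  congr 1
  ext w
  exact hr.adj_iff v w

theorem stable_outdegreeConfig (hr : F.IsRootedAcyclicOrientation r) :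
    F.Stable (outdegreeConfig r) := by
  intro v hv
  rw [outdegreeConfig_of_ne_zero hv, hr.deg_eq_add]
  have hpos : 0 < {w | r w v}.ncard := (Set.ncard_pos (Set.toFinite _)).2 (hr.exists_rel v hv)
  omega

theorem deg_le_add_ncard_iff (hr : F.IsRootedAcyclicOrientation r) {S : Set (Fin (n + 1))}
    (hS : ∀ w ∈ S, ¬r v w) :
    F.deg v ≤ {w | r v w}.ncard + {w ∈ S | F.Adj w v}.ncard ↔ ∀ w, r w v → w ∈ S := by
  have hadj : {w ∈ S | F.Adj w v} = {w | r w v} ∩ S := by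
    ext w
    have := hS w
    have := hr.adj_iff w v
    simp only [Set.mem_inter_iff, Set.mem_ofPred_eq]
    tauto
  rw [hr.deg_eq_add, hadj, Nat.add_le_add_iff_left]
  refine ⟨fun hle w hw => ?_, fun h => (congrArg Set.ncard (Set.inter_eq_left.2 h)).ge⟩
  exact Set.inter_eq_left.1 (Set.eq_of_subset_of_ncard_le Set.inter_subset_left hle) hw

theorem mem_toppledBefore_of_rel_of_mem_canonTop (hr : F.IsRootedAcyclicOrientation r)
    (hv : v ∈ F.canonTop (outdegreeConfig r) k) (hwv : r w v) :
    w ∈ F.toppledBefore (outdegreeConfig r) k := by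
  have hstable := hr.stable_outdegreeConfig
  induction k using Nat.strong_induction_on generalizing v w with
  | _ k ih =>
    cases k with
    | zero =>
      obtain rfl := mem_canonTop_zero.1 hv
      exact absurd hwv hr.not_rel_zero
    | succ k =>
      obtain ⟨hv0, -, hunstable⟩ := mem_canonTop_succ.1 hv
      have hnot : v ∉ F.toppledBefore (outdegreeConfig r) (k + 1) :=
        Set.disjoint_right.1 (hstable.disjoint_toppledBefore_canonTop _) hv
      have hsucc : ∀ x ∈ F.toppledBefore (outdegreeConfig r) (k + 1), ¬r v x := by
        intro x hx hvx
        obtain ⟨i, hi, hxi⟩ := mem_toppledBefore.1 hx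
        exact hnot (toppledBefore_mono hi.le (ih i hi hxi hvx))
      rw [hstable.deg_le_canonConfig_iff hv0 hnot, outdegreeConfig_of_ne_zero hv0,
        hr.deg_le_add_ncard_iff hsucc] at hunstable
      exact hunstable w hwv

theorem mem_toppledBefore_of_rel_of_mem_toppledBefore (hr : F.IsRootedAcyclicOrientation r)
    (hv : v ∈ F.toppledBefore (outdegreeConfig r) k) (hwv : r w v) :
    w ∈ F.toppledBefore (outdegreeConfig r) k := by
  obtain ⟨i, hi, hvi⟩ := mem_toppledBefore.1 hv
  exact toppledBefore_mono hi.le (hr.mem_toppledBefore_of_rel_of_mem_canonTop hvi hwv)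

theorem mem_canonTop_succ_of_forall_rel (hr : F.IsRootedAcyclicOrientation r) (hv : v ≠ 0)
    (hkind : v ∈ F.rows ↔ Odd k)
    (hnot : v ∉ F.toppledBefore (outdegreeConfig r) (k + 1))
    (hpred : ∀ w, r w v → w ∈ F.toppledBefore (outdegreeConfig r) (k + 1)) :
    v ∈ F.canonTop (outdegreeConfig r) (k + 1) := by
  refine mem_canonTop_succ.2 ⟨hv, hkind, ?_⟩
  rw [hr.stable_outdegreeConfig.deg_le_canonConfig_iff hv hnot, outdegreeConfig_of_ne_zero hv]
  exact (hr.deg_le_add_ncard_iff fun w hw hvw =>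
    hnot (hr.mem_toppledBefore_of_rel_of_mem_toppledBefore hw hvw)).2 hpred

theorem exists_mem_canonTop (hr : F.IsRootedAcyclicOrientation r) (v : Fin (n + 1)) :
    ∃ k, v ∈ F.canonTop (outdegreeConfig r) k := by
  induction v using hr.wellFounded.induction with
  | _ v ih =>
    rcases eq_or_ne v 0 with rfl | hv0
    · exact ⟨0, mem_canonTop_zero.2 rfl⟩
    let N := Finset.univ.sup (F.bIdx (outdegreeConfig r))
    obtain ⟨k, hNk, hkind⟩ : ∃ k, N ≤ k ∧ (v ∈ F.rows ↔ Odd k) := by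
      by_cases hv : v ∈ F.rows
      · exact ⟨2 * N + 1, by omega, by simp [hv]⟩
      · exact ⟨2 * N, by omega, by simp [hv]⟩
    have hpred : ∀ w, r w v → w ∈ F.toppledBefore (outdegreeConfig r) (k + 1) := fun w hw =>
      mem_toppledBefore.2 ⟨F.bIdx (outdegreeConfig r) w,
        Nat.lt_succ_of_le ((Finset.le_sup (Finset.mem_univ w)).trans hNk),
        mem_canonTop_bIdx (ih w hw)⟩
    by_cases hv : v ∈ F.toppledBefore (outdegreeConfig r) (k + 1)
    · obtain ⟨i, -, hvi⟩ := mem_toppledBefore.1 hv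
      exact ⟨i, hvi⟩
    · exact ⟨k + 1, hr.mem_canonTop_succ_of_forall_rel hv0 hkind hv hpred⟩

theorem bIdx_lt_bIdx (hr : F.IsRootedAcyclicOrientation r) (h : r u v) :
    F.bIdx (outdegreeConfig r) u < F.bIdx (outdegreeConfig r) v :=
  bIdx_lt_of_mem_toppledBefore
    (hr.mem_toppledBefore_of_rel_of_mem_canonTop (mem_canonTop_bIdx (hr.exists_mem_canonTop v)) h)

theorem bIdx_le_bIdx_of_forall_rel (hr : F.IsRootedAcyclicOrientation r)
    (hkind : u ∈ F.rows ↔ v ∈ F.rows) (h : ∀ w, r w u → r w v) :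
    F.bIdx (outdegreeConfig r) u ≤ F.bIdx (outdegreeConfig r) v := by
  have hv := mem_canonTop_bIdx (hr.exists_mem_canonTop v)
  generalize F.bIdx (outdegreeConfig r) v = s at hv ⊢
  rcases eq_or_ne u 0 with rfl | hu0
  · exact (bIdx_le (mem_canonTop_zero.2 rfl)).trans s.zero_le
  by_cases hu : u ∈ F.toppledBefore (outdegreeConfig r) s
  · exact (bIdx_lt_of_mem_toppledBefore hu).le
  have hpred : ∀ w, r w u → w ∈ F.toppledBefore (outdegreeConfig r) s :=
    fun w hw => hr.mem_toppledBefore_of_rel_of_mem_canonTop hv (h w hw)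
  cases s with
  | zero =>
    obtain ⟨w, hw⟩ := hr.exists_rel u hu0
    simpa [toppledBefore] using hpred w hw
  | succ s =>
    have hodd := hkind.trans (mem_canonTop_succ.1 hv).2.1
    exact bIdx_le (hr.mem_canonTop_succ_of_forall_rel hu0 hodd hu hpred)

theorem bIdx_le_bIdx_iff (hr : F.IsRootedAcyclicOrientation r)
    (hkind : u ∈ F.rows ↔ v ∈ F.rows) (hadj : ∀ w, r w u → F.Adj w v) :
    F.bIdx (outdegreeConfig r) u ≤ F.bIdx (outdegreeConfig r) v ↔ ∀ w, r w u → r w v := by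
  refine ⟨fun hle w hwu => ?_, hr.bIdx_le_bIdx_of_forall_rel hkind⟩
  refine ((hr.adj_iff w v).1 (hadj w hwu)).resolve_right fun hvw => ?_
  exact ((hr.bIdx_lt_bIdx hvw).trans (hr.bIdx_lt_bIdx hwu)).not_ge hle

end IsRootedAcyclicOrientation

end Orientation

section Tableau

variable {T : Fin (n + 1) → Fin (n + 1) → Bool}

/-- The orientation of `G(F)` read off from a filling `T`: a `1` in cell `(i, j)` directs the
edge from the row `i` to the column `j`, a `0` directs it from `j` to `i`. -/
def Arc (F : Ferrers n) (T : Fin (n + 1) → Fin (n + 1) → Bool) (u v : Fin (n + 1)) : Prop :=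
  (F.Cell u v ∧ T u v = true) ∨ (F.Cell v u ∧ T v u = false)

theorem arc_iff_of_mem_rows (hv : v ∈ F.rows) : F.Arc T u v ↔ F.Cell v u ∧ T v u = false :=
  or_iff_right fun h => h.1.2.1 hv

theorem arc_iff_of_notMem_rows (hv : v ∉ F.rows) : F.Arc T u v ↔ F.Cell u v ∧ T u v = true :=
  or_iff_left fun h => hv h.1.1

theorem adj_iff_arc : F.Adj u v ↔ F.Arc T u v ∨ F.Arc T v u := by
  unfold Adj Arc
  cases T u v <;> cases T v u <;> simp [or_comm]

theorem phiTC_eq_outdegreeConfig : F.phiTC T = outdegreeConfig (F.Arc T) := by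
  funext v
  unfold phiTC outdegreeConfig Arc
  split_ifs with hv0 hv
  · rfl
  · simp [Cell, hv]
  · simp [Cell, hv]

namespace IsEW

theorem eq_true_of_rectangle (hT : F.IsEW T) {i r j l : Fin (n + 1)} (hrj : F.Cell r j)
    (hrl : F.Cell r l) (hij : F.Cell i j) (hil : F.Cell i l) (hrj0 : T r j = false)
    (hrl1 : T r l = true) (hij1 : T i j = true) : T i l = true := by
  refine Bool.eq_true_of_not_eq_false fun hil0 => ?_
  have hrow : T r j = T r l :=
    hT.2.2.2 r i j l hrj hrl hij hil (hrj0.trans hil0.symm) (hrl1.trans hij1.symm)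
  exact Bool.false_ne_true (hrj0.symm.trans (hrow.trans hrl1))

/-- If the largest row `r` of `X` has an in-neighbour `j` in `X`, which in turn has an in-neighbour
`i` in `X`, then every out-neighbour of `r` is an out-neighbour of `i`, so a source of `X \ {r}` is
a source of `X`. -/
theorem exists_forall_not_arc (hT : F.IsEW T) (X : Finset (Fin (n + 1))) (hX : X.Nonempty) :
    ∃ v ∈ X, ∀ w ∈ X, ¬F.Arc T w v := by
  induction X using Finset.strongInduction with
  | H X ih =>
    by_contra! hno
    have hrows : (X.filter (· ∈ F.rows)).Nonempty := by
      obtain ⟨x, hx⟩ := hX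
      by_cases hxr : x ∈ F.rows
      · exact ⟨x, Finset.mem_filter.2 ⟨hx, hxr⟩⟩
      · obtain ⟨w, hw, hwx⟩ := hno x hx
        exact ⟨w, Finset.mem_filter.2 ⟨hw, ((arc_iff_of_notMem_rows hxr).1 hwx).1.1⟩⟩
    obtain ⟨r, hr, hmax⟩ := Finset.exists_max_image _ id hrows
    obtain ⟨hrX, hr⟩ := Finset.mem_filter.1 hr
    obtain ⟨j, hj, hjr⟩ := hno r hrX
    obtain ⟨hrj, hrj0⟩ := (arc_iff_of_mem_rows hr).1 hjr
    obtain ⟨i, hi, hij⟩ := hno j hj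
    obtain ⟨hij, hij1⟩ := (arc_iff_of_notMem_rows hrj.2.1).1 hij
    have hir : i ≠ r := by
      rintro rfl
      exact absurd hij1 (by simp [hrj0])
    have hle : i ≤ r := hmax i (Finset.mem_filter.2 ⟨hi, hij.1⟩)
    have hi' : i ∈ X.erase r := Finset.mem_erase.2 ⟨hir, hi⟩
    obtain ⟨v, hv, hsource⟩ := ih _ (Finset.erase_ssubset hrX) ⟨i, hi'⟩
    obtain ⟨w, hw, hwv⟩ := hno v (Finset.mem_of_mem_erase hv)
    obtain rfl : w = r := by
      by_contra hwr
      exact hsource w (Finset.mem_erase.2 ⟨hwr, hw⟩) hwv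
    obtain ⟨hwv, hwv1⟩ : F.Cell w v ∧ T w v = true := hwv.resolve_right fun h => h.1.2.1 hr
    have hiv : F.Cell i v := ⟨hij.1, hwv.2.1, hle.trans_lt hwv.2.2⟩
    exact hsource i hi' (.inl ⟨hiv, hT.eq_true_of_rectangle hrj hwv hij hiv hrj0 hwv1 hij1⟩)

theorem isRootedAcyclicOrientation_arc (hT : F.IsEW T) :
    F.IsRootedAcyclicOrientation (F.Arc T) where
  adj_iff _ _ := adj_iff_arc
  wellFounded := WellFounded.wellFounded_iff_has_min.2 fun X hX => by
    simpa using hT.exists_forall_not_arc X.toFinset (Set.toFinset_nonempty.2 hX)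
  exists_rel v hv0 := by
    by_cases hv : v ∈ F.rows
    · obtain ⟨j, hj⟩ := hT.2.2.1 v hv hv0
      exact ⟨j, .inr hj⟩
    · have hcell : F.Cell 0 v := ⟨F.zero_mem, hv, Fin.pos_of_ne_zero hv0⟩
      exact ⟨0, .inl ⟨hcell, hT.2.1 v hcell⟩⟩

end IsEW

theorem Cell.trans_lt (h : F.Cell w u) (hv : v ∉ F.rows) (huv : u < v) : F.Cell w v :=
  ⟨h.1, hv, h.2.2.trans huv⟩

theorem forall_arc_iff_column_condition (hu : u ∉ F.rows) (hv : v ∉ F.rows) (huv : u < v) :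
    (∀ w, F.Arc T w u → F.Arc T w v) ↔
      ∀ i, i ∈ F.rows → i < u → T i v = false → T i u = false := by
  simp only [arc_iff_of_notMem_rows hu, arc_iff_of_notMem_rows hv]
  constructor
  · intro h i hi hiu hiv
    refine Bool.eq_false_of_not_eq_true fun hiu1 => ?_
    exact Bool.false_ne_true (hiv.symm.trans (h i ⟨⟨hi, hu, hiu⟩, hiu1⟩).2)
  · rintro h w ⟨hcell, hwu⟩
    refine ⟨hcell.trans_lt hv huv, Bool.eq_true_of_not_eq_false fun hwv0 => ?_⟩
    exact Bool.false_ne_true ((h w hcell.1 hcell.2.2 hwv0).symm.trans hwu)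

end Tableau

end Ferrers

/-- For columns `k < k'`, the condition "every row `j' < k` with
`T_{j'k'} = 0` also has `T_{j'k} = 0`" holds if and only if `k'` lies in the same
block as `k` or in a later block of `CanonTop (φ_TC T)`. -/
theorem column_condition_iff_block_le {n : ℕ} (F : Ferrers n)
    (T : Fin (n + 1) → Fin (n + 1) → Bool) (hT : F.IsEW T)
    (k k' : Fin (n + 1)) (hk : k ∉ F.rows) (hk' : k' ∉ F.rows) (hkk : k < k') :
    (∀ j' : Fin (n + 1), j' ∈ F.rows → j' < k → T j' k' = false → T j' k = false) ↔
      F.bIdx (F.phiTC T) k ≤ F.bIdx (F.phiTC T) k' := by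
  rw [Ferrers.phiTC_eq_outdegreeConfig, ← Ferrers.forall_arc_iff_column_condition hk hk' hkk]
  have hadj : ∀ w, F.Arc T w k → F.Adj w k' := fun w hw =>
    .inl (((Ferrers.arc_iff_of_notMem_rows hk).1 hw).1.trans_lt hk' hkk)
  exact (hT.isRootedAcyclicOrientation_arc.bIdx_le_bIdx_iff (iff_of_false hk hk') hadj).symm
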